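/- Let s ∈ ℕ and let K : ℝ^d × ℝ^d → ℝ be a Mercer kernel with K ∈ C_b^{2s+1}(ℝ^d × ℝ^d), and set κ² := ‖K‖_{C_b^{2s}(ℝ^d × ℝ^d)}. Then every f ∈ H_K belongs to C_b^s(ℝ^d), and the inclusion H_K ↪ C_b^s(ℝ^d) is a bounded linear map satisfying ‖f‖_{C_b^s} ≤ κ ‖f‖_{H_K} for all f ∈ H_K. -/

import Mathlib

noncomputable section
open MeasureTheory RealInnerProductSpace Filter

/-- `ℝ^n` with the Euclidean structure. -/
abbrev Euc (n : ℕ) : Type := EuclideanSpace ℝ (Fin n)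

/-- Directional derivative of a real-valued function in the direction `v`. -/
def dirDeriv {F : Type*} [NormedAddCommGroup F] [NormedSpace ℝ F] (v : F) (f : F → ℝ) :
    F → ℝ := fun x => fderiv ℝ f x v

/-- Iterated partial derivative `D^α f`, where the multi-index `α` is encoded as the list of
the directions of the partial derivatives that are taken. -/
def mderiv {F : Type*} [NormedAddCommGroup F] [NormedSpace ℝ F] (vs : List F) (f : F → ℝ) :
    F → ℝ := vs.foldr dirDeriv f

/-- The `i`-th coordinate vector of `ℝ^n`. -/
def ee (n : ℕ) (i : Fin n) : Euc n := EuclideanSpace.single i 1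

/-- The coordinate directions of `ℝ^n × ℝ^n`; lists of such directions encode the
multi-indices `(α, β)` of mixed partial derivatives `D^{(α,β)} K`. -/
def prodDirs (n : ℕ) : Set (Euc n × Euc n) :=
  (Set.range fun i : Fin n => ((ee n i, 0) : Euc n × Euc n)) ∪
    (Set.range fun i : Fin n => (((0 : Euc n), ee n i) : Euc n × Euc n))

/-- `K` is a Mercer kernel: symmetric and positive semidefinite. -/
def IsMercer {n : ℕ} (K : Euc n → Euc n → ℝ) : Prop :=
  (∀ x y, K x y = K y x) ∧
    ∀ (m : ℕ) (x : Fin m → Euc n) (c : Fin m → ℝ),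
      0 ≤ ∑ i, ∑ j, c i * c j * K (x i) (x j)

/-- `K ∈ C_b^s(ℝ^n × ℝ^n)` : `K` is `s`-times continuously differentiable, and every partial
derivative of order at most `s` is bounded. -/
def KernelCb (n s : ℕ) (K : Euc n → Euc n → ℝ) : Prop :=
  ContDiff ℝ s (fun p : Euc n × Euc n => K p.1 p.2) ∧
    ∀ l : List (Euc n × Euc n), (∀ v ∈ l, v ∈ prodDirs n) → l.length ≤ s →
      ∃ C, ∀ p : Euc n × Euc n, |mderiv l (fun q : Euc n × Euc n => K q.1 q.2) p| ≤ C

/-- `κ² ≥ ‖K‖_{C_b^s}` : every partial derivative of `K` of order at most `s` is bounded in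
absolute value by `κ²` (with `κ ≥ 0`). -/
def KernelDerivBound (n s : ℕ) (K : Euc n → Euc n → ℝ) (κ : ℝ) : Prop :=
  0 ≤ κ ∧ ∀ l : List (Euc n × Euc n), (∀ v ∈ l, v ∈ prodDirs n) → l.length ≤ s →
    ∀ p : Euc n × Euc n, |mderiv l (fun q : Euc n × Euc n => K q.1 q.2) p| ≤ κ ^ 2

/-- `(H, emb, sec)` realizes the RKHS `H_K` of the kernel `K` : `H` is a Hilbert space of
functions (the linear inclusion `emb` into functions on `ℝ^n` is injective), the kernel
sections `sec x = K (x, ·)` belong to `H`, and the reproducing property holds. -/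
def IsRKHS {n : ℕ} {H : Type*} [NormedAddCommGroup H] [InnerProductSpace ℝ H]
    (K : Euc n → Euc n → ℝ) (emb : H →ₗ[ℝ] (Euc n → ℝ)) (sec : Euc n → H) : Prop :=
  Function.Injective emb ∧ (∀ x, emb (sec x) = K x) ∧
    ∀ (f : H) (x : Euc n), emb f x = ⟪f, sec x⟫

/-!
By the reproducing property `emb f x = ⟪f, sec x⟫`, and `K (x, y) = ⟪sec x, sec y⟫`, so everything
reduces to the smoothness of the feature map `sec`. If the kernel of a feature map `Φ` is `C²`,
its mixed second increment at `(x, x)` is the Gram kernel `⟪Φ (x + u) - Φ x, Φ (x + v) - Φ x⟫`, so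
the inner products of difference quotients of `Φ` converge; hence the quotients are Cauchy and `Φ`
is differentiable. The kernel of `x ↦ Φ' x v` is then the mixed derivative of the kernel of `Φ` in
the directions `(v, 0)` and `(0, v)`, and both the smoothness and the estimate follow by induction,
the latter starting from the Cauchy–Schwarz inequality `|⟪f, Φ x⟫| ≤ ‖f‖ ‖Φ x‖`.
-/

open Topology Asymptotics

/-- The directions of the mixed derivative `D^{(α, α)}` of a kernel, where the list `vs` encodes the
multi-index `α`. The two copies of each direction are kept adjacent. -/
def mixedDirs {E : Type*} [Zero E] (vs : List E) : List (E × E) :=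
  vs.flatMap fun v => [(0, v), (v, 0)]

lemma length_mixedDirs {E : Type*} [Zero E] (vs : List E) :
    (mixedDirs vs).length = 2 * vs.length := by
  simp [mixedDirs, mul_comm]

lemma mixedDirs_append {E : Type*} [Zero E] (vs ws : List E) :
    mixedDirs (vs ++ ws) = mixedDirs vs ++ mixedDirs ws :=
  List.flatMap_append

section PartialDerivatives

variable {E F : Type*} [NormedAddCommGroup E] [NormedSpace ℝ E]
  [NormedAddCommGroup F] [NormedSpace ℝ F]

lemma mderiv_append (vs ws : List E) (f : E → ℝ) :
    mderiv (vs ++ ws) f = mderiv vs (mderiv ws f) :=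
  List.foldr_append

lemma contDiff_dirDeriv {f : E → ℝ} {n : ℕ} (hf : ContDiff ℝ (n + 1 : ℕ) f) (v : E) :
    ContDiff ℝ n (dirDeriv v f) :=
  (hf.fderiv_right (m := n) (by norm_cast)).clm_apply contDiff_const

lemma dirDeriv_inl {g : E × F → ℝ} {p : E × F} (hg : DifferentiableAt ℝ g p) (v : E) :
    dirDeriv (v, 0) g p = dirDeriv v (fun x => g (x, p.2)) p.1 := by
  have h : HasFDerivAt (fun x => g (x, p.2)) ((fderiv ℝ g p).comp (.inl ℝ E F)) p.1 :=
    HasFDerivAt.comp (g := g) p.1 hg.hasFDerivAt (hasFDerivAt_prodMk_left p.1 p.2)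
  simp [dirDeriv, h.fderiv]

lemma dirDeriv_inr {g : E × F → ℝ} {p : E × F} (hg : DifferentiableAt ℝ g p) (w : F) :
    dirDeriv (0, w) g p = dirDeriv w (fun y => g (p.1, y)) p.2 := by
  have h : HasFDerivAt (fun y => g (p.1, y)) ((fderiv ℝ g p).comp (.inr ℝ E F)) p.2 :=
    HasFDerivAt.comp (g := g) p.2 hg.hasFDerivAt (hasFDerivAt_prodMk_right p.1 p.2)
  simp [dirDeriv, h.fderiv]

variable {G : Type*} [NormedAddCommGroup G] [NormedSpace ℝ G]

lemma exists_isLittleO_mixed_increment {k : E × F → G} {x : E} {y : F}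
    (hk : ContDiffAt ℝ 2 k (x, y)) :
    ∃ B : E →L[ℝ] F →L[ℝ] G,
      (fun p : E × F => k (x + p.1, y + p.2) - k (x + p.1, y) - (k (x, y + p.2) - k (x, y))
        - B p.1 p.2) =o[𝓝 0] fun p => ‖p.1‖ * ‖p.2‖ := by
  set A : E × F → E →L[ℝ] G := fun q => (fderiv ℝ k q).comp (.inl ℝ E F)
  set A' := fderiv ℝ A (x, y)
  have hA : HasStrictFDerivAt A A' (x, y) :=
    ((hk.fderiv_right (m := 1) (by norm_num)).clm_comp contDiffAt_const).hasStrictFDerivAt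
      (by norm_num)
  have hdiff : ∀ᶠ q in 𝓝 (x, y), DifferentiableAt ℝ k q :=
    (hk.eventually (by simp)).mono fun q hq => hq.differentiableAt (by norm_num)
  refine ⟨(A'.comp (.inr ℝ E F)).flip, isLittleO_iff.2 fun ε hε => ?_⟩
  obtain ⟨δ, hδ, hball⟩ := Metric.eventually_nhds_iff_ball.1
    ((hA.isLittleO.def hε).and ((hdiff.prodMk_nhds hdiff)))
  filter_upwards [Metric.ball_mem_nhds 0 hδ] with ⟨u, v⟩ huv
  obtain ⟨hu, hv⟩ : ‖u‖ < δ ∧ ‖v‖ < δ := by simpa [Prod.norm_def] using huv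
  have hmem : ∀ w ∈ Metric.ball x δ,
      (((w, y + v), (w, y)) : (E × F) × E × F) ∈ Metric.ball ((x, y), (x, y)) δ := fun w hw => by
    rw [mem_ball_iff_norm] at hw ⊢
    simp [Prod.norm_def, hw, hv]
  have hpartial : ∀ {w : E} {z : F}, DifferentiableAt ℝ k (w, z) →
      HasFDerivAt (fun w => k (w, z)) (A (w, z)) w := fun h =>
    HasFDerivAt.comp (g := k) _ h.hasFDerivAt (hasFDerivAt_prodMk_left _ _)
  have hmvt := (convex_ball x δ).norm_image_sub_le_of_norm_hasFDerivWithin_le'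
    (f := fun w => k (w, y + v) - k (w, y)) (f' := fun w => A (w, y + v) - A (w, y))
    (φ := A' (0, v)) (C := ε * ‖v‖) (x := x) (y := x + u)
    (fun w hw =>
      ((hpartial (hball _ (hmem w hw)).2.1).sub (hpartial (hball _ (hmem w hw)).2.2)
        ).hasFDerivWithinAt)
    (fun w hw => by simpa [Prod.norm_def] using (hball _ (hmem w hw)).1)
    (Metric.mem_ball_self hδ) (by simpa using hu)
  simpa [mul_assoc, mul_comm ‖v‖] using hmvt

end PartialDerivatives

section GramConvergence

variable {ι H : Type*} [NormedAddCommGroup H] [InnerProductSpace ℝ H]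

lemma tendsto_dist_of_tendsto_inner {l : Filter ι} {g : ι → H} {c : ℝ}
    (h : Tendsto (fun p : ι × ι => ⟪g p.1, g p.2⟫) (l ×ˢ l) (𝓝 c)) :
    Tendsto (fun p : ι × ι => dist (g p.1) (g p.2)) (l ×ˢ l) (𝓝 0) := by
  have hfst := h.comp ((tendsto_fst (f := l) (g := l)).prodMk tendsto_fst)
  have hsnd := h.comp ((tendsto_snd (f := l) (g := l)).prodMk tendsto_snd)
  have hlim := ((hfst.sub (h.const_mul 2)).add hsnd).sqrt
  rw [show c - 2 * c + c = 0 by ring, Real.sqrt_zero] at hlim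
  refine hlim.congr fun p => ?_
  simp only [Function.comp_apply, real_inner_self_eq_norm_sq]
  rw [← norm_sub_sq_real, Real.sqrt_sq (norm_nonneg _), dist_eq_norm]

lemma exists_tendsto_of_tendsto_inner [CompleteSpace H] {l : Filter ι} [l.NeBot]
    {g : ι → H} {c : ℝ} (h : Tendsto (fun p : ι × ι => ⟪g p.1, g p.2⟫) (l ×ˢ l) (𝓝 c)) :
    ∃ a, Tendsto g l (𝓝 a) :=
  CompleteSpace.complete <| cauchy_map_iff.2
    ⟨inferInstance, tendsto_uniformity_iff_dist_tendsto_zero.2 (tendsto_dist_of_tendsto_inner h)⟩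

end GramConvergence

section GramDerivative

variable {E H : Type*} [NormedAddCommGroup E] [NormedSpace ℝ E]
  [NormedAddCommGroup H] [InnerProductSpace ℝ H]

lemma exists_clm_of_inner_eq {L : E → H} {B : E →L[ℝ] E →L[ℝ] ℝ}
    (hL : ∀ u v, ⟪L u, L v⟫ = B u v) : ∃ T : E →L[ℝ] H, ⇑T = L := by
  have hadd (u v : E) : L (u + v) = L u + L v := by
    rw [← sub_eq_zero, ← inner_self_eq_zero (𝕜 := ℝ)]
    simp only [inner_sub_left, inner_sub_right, inner_add_left, inner_add_right, hL, map_add,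
      add_apply]
    ring
  have hsmul (c : ℝ) (v : E) : L (c • v) = c • L v := by
    rw [← sub_eq_zero, ← inner_self_eq_zero (𝕜 := ℝ)]
    simp only [inner_sub_left, inner_sub_right, real_inner_smul_left, real_inner_smul_right, hL,
      map_smul, smul_apply, smul_eq_mul]
    ring
  have hbound (v : E) : ‖L v‖ ≤ √‖B‖ * ‖v‖ := by
    refine le_of_sq_le_sq ?_ (by positivity)
    calc ‖L v‖ ^ 2 = B v v := by rw [← real_inner_self_eq_norm_sq, hL]
      _ ≤ ‖B‖ * ‖v‖ * ‖v‖ := (Real.le_norm_self _).trans (B.le_opNorm₂ v v)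
      _ = (√‖B‖ * ‖v‖) ^ 2 := by rw [mul_pow, Real.sq_sqrt (norm_nonneg B)]; ring
  exact ⟨LinearMap.mkContinuous ⟨⟨L, hadd⟩, hsmul⟩ _ hbound, rfl⟩

/-- `B` is the mixed second derivative at the origin of the Gram kernel `(u, v) ↦ ⟪D u, D v⟫`,
in the strong sense that the error is `o(‖u‖ ‖v‖)` jointly in `u` and `v`. It is applied to the
increments `D u = Φ (x + u) - Φ x` of a feature map. -/
def HasGramDeriv (D : E → H) (B : E →L[ℝ] E →L[ℝ] ℝ) : Prop :=
  (fun p : E × E => ⟪D p.1, D p.2⟫ - B p.1 p.2) =o[𝓝 0] fun p => ‖p.1‖ * ‖p.2‖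

namespace HasGramDeriv

variable {D : E → H} {B : E →L[ℝ] E →L[ℝ] ℝ}

lemma tendsto_inner_slope (hD : HasGramDeriv D B) (u v : E) :
    Tendsto (fun p : ℝ × ℝ => ⟪p.1⁻¹ • D (p.1 • u), p.2⁻¹ • D (p.2 • v)⟫)
      (𝓝[≠] 0 ×ˢ 𝓝[≠] 0) (𝓝 (B u v)) := by
  have hscale : Tendsto (fun p : ℝ × ℝ => (p.1 • u, p.2 • v)) (𝓝[≠] 0 ×ˢ 𝓝[≠] 0) (𝓝 0) := by
    have hcont : Continuous fun p : ℝ × ℝ => (p.1 • u, p.2 • v) := by fun_prop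
    refine (hcont.tendsto' 0 0 (by simp)).mono_left ?_
    exact (prod_mono nhdsWithin_le_nhds nhdsWithin_le_nhds).trans_eq nhds_prod_eq.symm
  have hbigO : (fun p : ℝ × ℝ => ‖p.1 • u‖ * ‖p.2 • v‖) =O[𝓝[≠] 0 ×ˢ 𝓝[≠] 0]
      fun p => p.1 * p.2 :=
    .of_bound (‖u‖ * ‖v‖) <| .of_forall fun p => le_of_eq <| by
      simp only [norm_mul, norm_norm, norm_smul]
      ring
  have hlim := ((hD.comp_tendsto hscale).trans_isBigO hbigO).tendsto_div_nhds_zero.add_const (B u v)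
  rw [zero_add] at hlim
  refine hlim.congr' ?_
  filter_upwards [prod_mem_prod self_mem_nhdsWithin self_mem_nhdsWithin] with ⟨s, t⟩ ⟨hs, ht⟩
  have hs : s ≠ 0 := hs
  have ht : t ≠ 0 := ht
  simp only [Function.comp_apply, map_smul, smul_apply, smul_eq_mul, real_inner_smul_left,
    real_inner_smul_right]
  field_simp
  ring

lemma eventually_norm_sub_slope_le (hD : HasGramDeriv D B) {c : ℝ} (hc : 0 < c) :
    ∀ᶠ u in 𝓝 0, ∀ t : ℝ, t ≠ 0 → |t| ≤ 1 → ‖D u - t⁻¹ • D (t • u)‖ ≤ c * ‖u‖ := by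
  obtain ⟨δ, hδ, hball⟩ := Metric.eventually_nhds_iff_ball.1
    (hD.def (show 0 < c ^ 2 / 4 by positivity))
  have hgram {u v : E} (hu : ‖u‖ < δ) (hv : ‖v‖ < δ) :
      |⟪D u, D v⟫ - B u v| ≤ c ^ 2 / 4 * (‖u‖ * ‖v‖) := by
    simpa using hball (u, v) (by simp [Prod.norm_def, hu, hv])
  filter_upwards [Metric.ball_mem_nhds 0 hδ] with u hu t ht ht1
  rw [mem_ball_zero_iff] at hu
  have htu : ‖t • u‖ < δ := by
    rw [norm_smul]
    exact (mul_le_of_le_one_left (norm_nonneg u) ht1).trans_lt hu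
  have hcross : |t⁻¹ * (⟪D u, D (t • u)⟫ - B u (t • u))| ≤ c ^ 2 / 4 * ‖u‖ ^ 2 := by
    rw [abs_mul, abs_inv, inv_mul_le_iff₀ (abs_pos.2 ht)]
    refine (hgram hu htu).trans_eq ?_
    rw [norm_smul, Real.norm_eq_abs]
    ring
  have hscaled : |(t ^ 2)⁻¹ * (⟪D (t • u), D (t • u)⟫ - B (t • u) (t • u))| ≤
      c ^ 2 / 4 * ‖u‖ ^ 2 := by
    rw [abs_mul, abs_inv, inv_mul_le_iff₀ (by positivity)]
    refine (hgram htu htu).trans_eq ?_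
    rw [norm_smul, Real.norm_eq_abs, abs_pow]
    ring
  refine le_of_sq_le_sq ?_ (by positivity)
  calc ‖D u - t⁻¹ • D (t • u)‖ ^ 2
      = (⟪D u, D u⟫ - B u u) - 2 * (t⁻¹ * (⟪D u, D (t • u)⟫ - B u (t • u)))
        + (t ^ 2)⁻¹ * (⟪D (t • u), D (t • u)⟫ - B (t • u) (t • u)) := by
        simp only [← real_inner_self_eq_norm_sq, inner_sub_left, inner_sub_right,
          real_inner_smul_left, real_inner_smul_right, map_smul, smul_apply, smul_eq_mul,
          real_inner_comm (D u)]
        field_simp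
        ring
    _ ≤ (c * ‖u‖) ^ 2 := by
        linarith [(abs_le.1 (hgram hu hu)).2, (abs_le.1 hcross).1, (abs_le.1 hscaled).2]

variable [CompleteSpace H]

lemma exists_clm_tendsto_slope (hD : HasGramDeriv D B) :
    ∃ T : E →L[ℝ] H, ∀ u, Tendsto (fun t : ℝ => t⁻¹ • D (t • u)) (𝓝[≠] 0) (𝓝 (T u)) := by
  choose L hL using fun u => exists_tendsto_of_tendsto_inner
    (g := fun t : ℝ => t⁻¹ • D (t • u)) (hD.tendsto_inner_slope u u)
  have hinner (u v : E) : ⟪L u, L v⟫ = B u v :=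
    tendsto_nhds_unique (((hL u).comp tendsto_fst).inner ((hL v).comp tendsto_snd))
      (hD.tendsto_inner_slope u v)
  obtain ⟨T, rfl⟩ := exists_clm_of_inner_eq hinner
  exact ⟨T, hL⟩

lemma exists_clm_isLittleO (hD : HasGramDeriv D B) :
    ∃ T : E →L[ℝ] H, (fun u => D u - T u) =o[𝓝 0] fun u => u := by
  obtain ⟨T, hT⟩ := hD.exists_clm_tendsto_slope
  refine ⟨T, isLittleO_iff.2 fun c hc => ?_⟩
  filter_upwards [hD.eventually_norm_sub_slope_le hc] with u hu
  refine le_of_tendsto ((tendsto_const_nhds.sub (hT u)).norm) ?_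
  have hsmall : ∀ᶠ t : ℝ in 𝓝[≠] 0, |t| ≤ 1 := nhdsWithin_le_nhds
    (continuous_abs.continuousAt.eventually (Iic_mem_nhds (by simp)))
  filter_upwards [hsmall, self_mem_nhdsWithin] with t ht1 ht using hu t ht ht1

end HasGramDeriv

end GramDerivative

section FeatureMap

variable {E H : Type*} [NormedAddCommGroup H] [InnerProductSpace ℝ H]

/-- The kernel `(x, y) ↦ ⟪Φ x, Φ y⟫` of a feature map `Φ`. The reproducing kernel of an RKHS is the
kernel of the feature map `x ↦ K (x, ·)`. -/
def featureKernel (Φ : E → H) : E × E → ℝ := fun p => ⟪Φ p.1, Φ p.2⟫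

lemma continuous_of_continuous_featureKernel [TopologicalSpace E] {Φ : E → H}
    (h : Continuous (featureKernel Φ)) : Continuous Φ := by
  refine continuous_iff_continuousAt.2 fun x => tendsto_iff_dist_tendsto_zero.2 ?_
  have hgram : Tendsto (fun p : E × E => ⟪Φ p.1, Φ p.2⟫) (𝓝 x ×ˢ 𝓝 x) (𝓝 ⟪Φ x, Φ x⟫) :=
    nhds_prod_eq (x := x) (y := x) ▸ h.tendsto (x, x)
  exact (tendsto_dist_of_tendsto_inner hgram).comp
    (tendsto_id.prodMk (tendsto_const_nhds (x := x)))

variable [NormedAddCommGroup E] [NormedSpace ℝ E] {Φ : E → H}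

lemma dirDeriv_const_inner {y : E} (hΦ : DifferentiableAt ℝ Φ y) (f : H) (v : E) :
    dirDeriv v (fun y => ⟪f, Φ y⟫) y = ⟪f, fderiv ℝ Φ y v⟫ := by
  simp [dirDeriv, fderiv_inner_apply ℝ (differentiableAt_const f) hΦ]

lemma dirDeriv_inner_const {x : E} (hΦ : DifferentiableAt ℝ Φ x) (f : H) (v : E) :
    dirDeriv v (fun x => ⟪Φ x, f⟫) x = ⟪fderiv ℝ Φ x v, f⟫ := by
  simp [dirDeriv, fderiv_inner_apply ℝ hΦ (differentiableAt_const f)]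

lemma featureKernel_fderiv (hΦ : Differentiable ℝ Φ) (h : ContDiff ℝ 2 (featureKernel Φ)) (v : E) :
    featureKernel (fun x => fderiv ℝ Φ x v) = mderiv [(0, v), (v, 0)] (featureKernel Φ) := by
  have hpartial : dirDeriv (v, 0) (featureKernel Φ) = fun p => ⟪fderiv ℝ Φ p.1 v, Φ p.2⟫ := by
    funext p
    rw [dirDeriv_inl (h.differentiable (by norm_num) p)]
    exact dirDeriv_inner_const (hΦ p.1) (Φ p.2) v
  have hdiff : Differentiable ℝ (dirDeriv (v, 0) (featureKernel Φ)) :=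
    (contDiff_dirDeriv (n := 1) h (v, 0)).differentiable (by norm_num)
  funext p
  change _ = dirDeriv (0, v) (dirDeriv (v, 0) (featureKernel Φ)) p
  rw [dirDeriv_inr (hdiff p), hpartial]
  exact (dirDeriv_const_inner (hΦ p.2) (fderiv ℝ Φ p.1 v) v).symm

lemma contDiff_featureKernel_fderiv (hΦ : Differentiable ℝ Φ) {n : ℕ}
    (h : ContDiff ℝ (2 * (n + 1) : ℕ) (featureKernel Φ)) (v : E) :
    ContDiff ℝ (2 * n : ℕ) (featureKernel fun x => fderiv ℝ Φ x v) := by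
  rw [featureKernel_fderiv hΦ (h.of_le (by norm_cast; omega))]
  exact contDiff_dirDeriv (contDiff_dirDeriv h _) _

variable [CompleteSpace H]

lemma differentiableAt_of_contDiffAt_featureKernel {x : E}
    (h : ContDiffAt ℝ 2 (featureKernel Φ) (x, x)) : DifferentiableAt ℝ Φ x := by
  obtain ⟨B, hB⟩ := exists_isLittleO_mixed_increment h
  have hgram : HasGramDeriv (fun u => Φ (x + u) - Φ x) B := by
    refine hB.congr_left fun p => ?_
    simp only [featureKernel, inner_sub_left, inner_sub_right]
    ring
  obtain ⟨T, hT⟩ := hgram.exists_clm_isLittleO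
  exact (hasFDerivAt_iff_isLittleO_nhds_zero.2 hT).differentiableAt

lemma differentiable_of_contDiff_featureKernel {n : ℕ}
    (h : ContDiff ℝ (2 * (n + 1) : ℕ) (featureKernel Φ)) : Differentiable ℝ Φ := fun _ =>
  differentiableAt_of_contDiffAt_featureKernel (h.of_le (by norm_cast; omega)).contDiffAt

theorem contDiff_of_contDiff_featureKernel [FiniteDimensional ℝ E] {n : ℕ}
    (h : ContDiff ℝ (2 * n : ℕ) (featureKernel Φ)) : ContDiff ℝ n Φ := by
  induction n generalizing Φ with
  | zero => exact contDiff_zero.2 (continuous_of_continuous_featureKernel h.continuous)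
  | succ n ih =>
    have hΦ : Differentiable ℝ Φ := differentiable_of_contDiff_featureKernel h
    rw [Nat.cast_succ, contDiff_succ_iff_fderiv]
    exact ⟨hΦ, by simp, contDiff_clm_apply_iff.2 fun v => ih (contDiff_featureKernel_fderiv hΦ h v)⟩

theorem abs_mderiv_inner_le {vs : List E}
    (h : ContDiff ℝ (2 * vs.length : ℕ) (featureKernel Φ)) (f : H) (x : E) :
    |mderiv vs (fun y => ⟪f, Φ y⟫) x| ≤
      √(mderiv (mixedDirs vs) (featureKernel Φ) (x, x)) * ‖f‖ := by
  -- Peeling off the innermost derivative replaces `Φ` by its directional derivative.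
  induction vs using List.reverseRecOn generalizing Φ with
  | nil =>
    calc |⟪f, Φ x⟫| ≤ ‖f‖ * ‖Φ x‖ := abs_real_inner_le_norm f (Φ x)
      _ = √⟪Φ x, Φ x⟫ * ‖f‖ := by rw [norm_eq_sqrt_real_inner (Φ x), mul_comm]
  | append_singleton vs v ih =>
    rw [List.length_append, List.length_singleton] at h
    have hΦ : Differentiable ℝ Φ := differentiable_of_contDiff_featureKernel h
    have hinner : mderiv [v] (fun y => ⟪f, Φ y⟫) = fun y => ⟪f, fderiv ℝ Φ y v⟫ :=
      funext fun y => dirDeriv_const_inner (hΦ y) f v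
    have hkernel : mderiv (mixedDirs [v]) (featureKernel Φ)
        = featureKernel fun y => fderiv ℝ Φ y v :=
      (featureKernel_fderiv hΦ (h.of_le (by norm_cast; omega)) v).symm
    rw [mderiv_append, hinner, mixedDirs_append, mderiv_append, hkernel]
    exact ih (contDiff_featureKernel_fderiv hΦ h v)

end FeatureMap

lemma mixedDirs_subset_prodDirs {d : ℕ} (α : List (Fin d)) :
    ∀ p ∈ mixedDirs (α.map (ee d)), p ∈ prodDirs d := by
  simp only [mixedDirs, List.flatMap_map, List.mem_flatMap, List.mem_cons, List.not_mem_nil,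
    or_false]
  rintro p ⟨i, -, rfl | rfl⟩
  exacts [Or.inr ⟨i, rfl⟩, Or.inl ⟨i, rfl⟩]

lemma KernelDerivBound.sqrt_mderiv_mixedDirs_le {d s : ℕ} {K : Euc d → Euc d → ℝ} {κ : ℝ}
    (hκ : KernelDerivBound d (2 * s) K κ) {α : List (Fin d)} (hα : α.length ≤ s)
    (p : Euc d × Euc d) :
    √(mderiv (mixedDirs (α.map (ee d))) (fun q => K q.1 q.2) p) ≤ κ := by
  have hlength : (mixedDirs (α.map (ee d))).length ≤ 2 * s := by
    rw [length_mixedDirs, List.length_map]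
    omega
  have hbound := hκ.2 _ (mixedDirs_subset_prodDirs α) hlength p
  exact Real.sqrt_le_iff.2 ⟨hκ.1, (le_abs_self _).trans hbound⟩

open UniformSpace UniformSpace.Completion in
theorem rkhs_embedding_into_Cb_general {E H : Type*} [NormedAddCommGroup E] [NormedSpace ℝ E]
    [FiniteDimensional ℝ E] [NormedAddCommGroup H] [InnerProductSpace ℝ H] {s : ℕ}
    {K : E → E → ℝ} {emb : H → E → ℝ} {sec : E → H}
    (hsec : ∀ x, emb (sec x) = K x) (hrep : ∀ f x, emb f x = ⟪f, sec x⟫)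
    (hK : ContDiff ℝ (2 * s : ℕ) (fun p : E × E => K p.1 p.2)) (f : H) :
    ContDiff ℝ s (emb f) ∧ ∀ vs : List E, vs.length ≤ s → ∀ x : E,
      |mderiv vs (emb f) x| ≤ √(mderiv (mixedDirs vs) (fun p => K p.1 p.2) (x, x)) * ‖f‖ := by
  set Φ : E → Completion H := fun x => (sec x : Completion H)
  have hkernel : (fun p : E × E => K p.1 p.2) = featureKernel Φ := by
    funext p
    rw [featureKernel, inner_coe, ← hrep, hsec]
  have hemb : emb f = fun x => ⟪(f : Completion H), Φ x⟫ :=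
    funext fun x => by rw [inner_coe, hrep]
  rw [hkernel] at hK ⊢
  rw [hemb, ← norm_coe f]
  exact ⟨contDiff_const.inner ℝ (contDiff_of_contDiff_featureKernel hK), fun vs hvs x =>
    abs_mderiv_inner_le (hK.of_le (by norm_cast; omega)) _ x⟩

/-- Theorem 2.8 (iii): if `K` is a Mercer kernel of class `C_b^{2s+1}(ℝ^d × ℝ^d)` and
`κ² = ‖K‖_{C_b^{2s}}`, then every `f ∈ H_K` belongs to `C_b^s(ℝ^d)` and the inclusion
`H_K ↪ C_b^s(ℝ^d)` (which is linear since `emb` is) is bounded: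
`‖f‖_{C_b^s} = sup_{|α| ≤ s} ‖D^α f‖_∞ ≤ κ ‖f‖_{H_K}`. -/
theorem rkhs_embedding_into_Cb
    {d s : ℕ} (K : Euc d → Euc d → ℝ) (κ : ℝ)
    (hMercer : IsMercer K)
    (hCb : KernelCb d (2 * s + 1) K)
    (hκ : KernelDerivBound d (2 * s) K κ)
    {H : Type*} [NormedAddCommGroup H] [InnerProductSpace ℝ H] [CompleteSpace H]
    (emb : H →ₗ[ℝ] (Euc d → ℝ)) (sec : Euc d → H)
    (hRKHS : IsRKHS K emb sec) :
    ∀ f : H, ContDiff ℝ s (emb f) ∧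
      ∀ α : List (Fin d), α.length ≤ s → ∀ x : Euc d,
        |mderiv (α.map (ee d)) (emb f) x| ≤ κ * ‖f‖ := by
  intro f
  have h := rkhs_embedding_into_Cb_general (s := s) hRKHS.2.1 hRKHS.2.2
    (hCb.1.of_le (by norm_cast; omega)) f
  exact ⟨h.1, fun α hα x => (h.2 _ (by simpa using hα) x).trans
    (by gcongr; exact hκ.sqrt_mderiv_mixedDirs_le hα (x, x))⟩
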